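/- arXiv:2604.26484 — 2 statements merged into one kernel-verified Lean document; each statement's English description precedes it below -/
import Mathlib

section
/- For every X ∈ 𝓕, every T ∈ 𝒢, and every Z ∈ ℝ^{n×p}, one has the adjoint identity ⟨Xᵀφ(Z) + Zᵀφ(X), T⟩ = ⟨Z, φ(X)(Tᵀ + ψ(T))⟩, i.e. tr((Xᵀφ(Z) + Zᵀφ(X))ᵀ T) = tr(Zᵀ · φ(X)(Tᵀ + ψ(T))). In other words, the adjoint of DC(X) is given by DC(X)*[T] = φ(X)Φ(T) with Φ(T) = Tᵀ + ψ(T). -/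
open Matrix

attribute [local instance] Matrix.frobeniusNormedAddCommGroup Matrix.frobeniusNormedSpace

/-- Frobenius inner product `⟨A, B⟩ = tr(AᵀB)`. -/
noncomputable def frobInner {n p : ℕ} (A B : Matrix (Fin n) (Fin p) ℝ) : ℝ :=
  (Aᵀ * B).trace

/-- The constraint map `C(X) = Xᵀ φ(X) − I_p`. -/
noncomputable def Cmap {n p : ℕ}
    (φ : Matrix (Fin n) (Fin p) ℝ →ₗ[ℝ] Matrix (Fin n) (Fin p) ℝ)
    (X : Matrix (Fin n) (Fin p) ℝ) : Matrix (Fin p) (Fin p) ℝ :=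
  Xᵀ * φ X - 1

/-- The constraint dissolving operator `𝒜(X) = (3/2)X − (1/2)X φ(X)ᵀ X`. -/
noncomputable def Amap {n p : ℕ}
    (φ : Matrix (Fin n) (Fin p) ℝ →ₗ[ℝ] Matrix (Fin n) (Fin p) ℝ)
    (X : Matrix (Fin n) (Fin p) ℝ) : Matrix (Fin n) (Fin p) ℝ :=
  (3/2 : ℝ) • X - (1/2 : ℝ) • (X * (φ X)ᵀ * X)

/-- `𝒢 = span{X₁ᵀ X₂ : X₁, X₂ ∈ 𝓕}`. -/
noncomputable def Gspan {n p : ℕ} (𝓕 : Submodule ℝ (Matrix (Fin n) (Fin p) ℝ)) :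
    Submodule ℝ (Matrix (Fin p) (Fin p) ℝ) :=
  Submodule.span ℝ {T | ∃ X₁ ∈ 𝓕, ∃ X₂ ∈ 𝓕, T = X₁ᵀ * X₂}

section FrobeniusAdjoint

variable {R m n k l : Type*} [NonUnitalCommSemiring R] [Fintype m] [Fintype n]

theorem transpose_transpose_mul_mul (X : Matrix m n R) (A : Matrix m k R) (T : Matrix n l R) :
    (Xᵀ * A)ᵀ * T = Aᵀ * (X * T) := by
  rw [transpose_mul, transpose_transpose, Matrix.mul_assoc]

variable [Fintype k]

theorem trace_transpose_transpose_mul_mul_eq_trace_mul_transpose (Z : Matrix m n R)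
    (Y : Matrix m k R) (T : Matrix n k R) :
    ((Zᵀ * Y)ᵀ * T).trace = (Zᵀ * (Y * Tᵀ)).trace := by
  rw [← trace_transpose_mul, transpose_transpose, Matrix.mul_assoc]

/-- The adjoint of `DC(X)` for an arbitrary `φ` with Frobenius adjoint `φ'`, before any
factorization of `φ'(XT)` through `φ(X)`. -/
theorem trace_transpose_add_mul_of_adjoint {φ : Matrix m n R → Matrix m k R}
    {φ' : Matrix m k R → Matrix m n R}
    (hφ : ∀ A B, ((φ A)ᵀ * B).trace = (Aᵀ * φ' B).trace)
    (X Z : Matrix m n R) (T : Matrix n k R) :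
    ((Xᵀ * φ Z + Zᵀ * φ X)ᵀ * T).trace = (Zᵀ * (φ X * Tᵀ + φ' (X * T))).trace := by
  calc ((Xᵀ * φ Z + Zᵀ * φ X)ᵀ * T).trace
      = ((Xᵀ * φ Z)ᵀ * T).trace + ((Zᵀ * φ X)ᵀ * T).trace := by
        rw [transpose_add, Matrix.add_mul, trace_add]
    _ = ((φ Z)ᵀ * (X * T)).trace + (Zᵀ * (φ X * Tᵀ)).trace := by
        rw [transpose_transpose_mul_mul,
          trace_transpose_transpose_mul_mul_eq_trace_mul_transpose]
    _ = (Zᵀ * φ' (X * T)).trace + (Zᵀ * (φ X * Tᵀ)).trace := by rw [hφ]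
    _ = (Zᵀ * (φ X * Tᵀ + φ' (X * T))).trace := by
        rw [Matrix.mul_add, trace_add, add_comm]

theorem stmt_2_general {φ : Matrix m n R → Matrix m k R} {φ' : Matrix m k R → Matrix m n R}
    (hφ : ∀ A B, ((φ A)ᵀ * B).trace = (Aᵀ * φ' B).trace)
    {X : Matrix m n R} {T : Matrix n k R} {S : Matrix k n R} (hS : φ' (X * T) = φ X * S)
    (Z : Matrix m n R) :
    ((Xᵀ * φ Z + Zᵀ * φ X)ᵀ * T).trace = (Zᵀ * (φ X * (Tᵀ + S))).trace := by
  rw [trace_transpose_add_mul_of_adjoint hφ, hS, Matrix.mul_add (φ X)]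

end FrobeniusAdjoint

theorem stmt_2 {n p : ℕ} (hn : 0 < n) (hp : 0 < p)
    (φ : Matrix (Fin n) (Fin p) ℝ →ₗ[ℝ] Matrix (Fin n) (Fin p) ℝ)
    (𝓕 : Submodule ℝ (Matrix (Fin n) (Fin p) ℝ))
    (ψ : Matrix (Fin p) (Fin p) ℝ →ₗ[ℝ] Matrix (Fin p) (Fin p) ℝ)
    (hφ𝓕 : ∀ X ∈ 𝓕, φ X ∈ 𝓕)
    (hXT : ∀ X ∈ 𝓕, ∀ T ∈ Gspan 𝓕, X * T ∈ 𝓕)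
    (hφsa : ∀ A B : Matrix (Fin n) (Fin p) ℝ, frobInner (φ A) B = frobInner A (φ B))
    (hψG : ∀ T ∈ Gspan 𝓕, ψ T ∈ Gspan 𝓕)
    (hφψ : ∀ X ∈ 𝓕, ∀ T ∈ Gspan 𝓕, φ (X * T) = φ X * ψ T)
    (hψφ : ∀ X ∈ 𝓕, ψ ((φ X)ᵀ * X) = Xᵀ * φ X)
    (X : Matrix (Fin n) (Fin p) ℝ) (hX : X ∈ 𝓕)
    (T : Matrix (Fin p) (Fin p) ℝ) (hT : T ∈ Gspan 𝓕)
    (Z : Matrix (Fin n) (Fin p) ℝ) :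
    ((Xᵀ * φ Z + Zᵀ * φ X)ᵀ * T).trace = (Zᵀ * (φ X * (Tᵀ + ψ T))).trace :=
  stmt_2_general hφsa (hφψ X hX T hT) Z
end

section
/- Let f : ℝ^{n×p} → ℝ satisfy |f(A) − f(B)| ≤ M‖A − B‖ for all A, B ∈ ℝ^{n×p} for some M ≥ 0, let β > 0, and define h(W) = f(𝒜(W)) + (β/2)‖C(W)‖². Let Y ∈ ℝ^{n×p} and suppose there are constants L, δ, α, α_c > 0 such that ‖𝒜(Y)‖ ≤ α/3, ‖C(𝒜(Y))‖ ≤ (1/2)‖C(Y)‖, ‖C(𝒜(Y))‖ ≤ (8 α_c L / δ²)‖C(Y)‖², and β ≥ 16 α α_c L M / (3δ²). Then h(𝒜(Y)) ≤ h(Y) − (β/8)‖C(Y)‖². -/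
open Matrix

attribute [local instance] Matrix.frobeniusNormedAddCommGroup Matrix.frobeniusNormedSpace

/-!
Since `𝒜(W) - W = -(1/2) W C(W)ᵀ`, the map `𝒜` moves `W` by at most `‖W‖ ‖C(W)‖ / 2`. At `W = 𝒜(Y)`
the defect `C(W)` is already quadratic in `‖C(Y)‖`, so by the Lipschitz bound the objective rises by
at most `(β/4) ‖C(Y)‖²` once `β` is large enough. Halving the defect lowers the penalty
`(β/2) ‖C‖²` by at least `(3β/8) ‖C(Y)‖²`, which leaves a net decrease of `(β/8) ‖C(Y)‖²`.
-/

section ConstraintDissolving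

open scoped NNReal

variable {𝕜 m n : Type*} [RCLike 𝕜] [Fintype m] [Fintype n] [DecidableEq n]

/-- The constraint map `C(X) = Xᵀ φ(X) - 1` of a possibly nonlinear `φ` over `ℝ` or `ℂ`. Entrywise
conjugation as `φ` gives the conjugate of `Xᴴ X - 1`, the constraint of the complex Stiefel
manifold. -/
def constraintDefect (φ : Matrix m n 𝕜 → Matrix m n 𝕜) (X : Matrix m n 𝕜) : Matrix n n 𝕜 :=
  Xᵀ * φ X - 1

/-- The constraint dissolving map `𝒜(X) = (3/2) X - (1/2) X φ(X)ᵀ X` of a possibly nonlinear `φ`. -/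
noncomputable def dissolve (φ : Matrix m n 𝕜 → Matrix m n 𝕜) (X : Matrix m n 𝕜) : Matrix m n 𝕜 :=
  (3 / 2 : 𝕜) • X - (1 / 2 : 𝕜) • (X * (φ X)ᵀ * X)

/-- The penalty function `h(W) = f(𝒜(W)) + (β/2) ‖C(W)‖²`, which trades the constraint `C(W) = 0`
for the composition of the objective with `𝒜`. -/
noncomputable def dissolvingPenalty (φ : Matrix m n 𝕜 → Matrix m n 𝕜) (f : Matrix m n 𝕜 → ℝ)
    (β : ℝ) (W : Matrix m n 𝕜) : ℝ :=
  f (dissolve φ W) + β / 2 * ‖constraintDefect φ W‖ ^ 2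

variable {φ : Matrix m n 𝕜 → Matrix m n 𝕜} {f : Matrix m n 𝕜 → ℝ} {Y : Matrix m n 𝕜} {ρ κ β : ℝ}

theorem dissolve_sub_self (φ : Matrix m n 𝕜 → Matrix m n 𝕜) (W : Matrix m n 𝕜) :
    dissolve φ W - W = (-(1 / 2) : 𝕜) • (W * (constraintDefect φ W)ᵀ) := by
  have h_expand : W * (constraintDefect φ W)ᵀ = W * (φ W)ᵀ * W - W := by
    rw [constraintDefect, transpose_sub, transpose_mul, transpose_transpose, transpose_one,
      Matrix.mul_sub, Matrix.mul_one, Matrix.mul_assoc]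
  rw [h_expand, dissolve]
  module

theorem norm_dissolve_sub_self_le (φ : Matrix m n 𝕜 → Matrix m n 𝕜) (W : Matrix m n 𝕜) :
    ‖dissolve φ W - W‖ ≤ 1 / 2 * (‖W‖ * ‖constraintDefect φ W‖) := by
  calc ‖dissolve φ W - W‖
      = 1 / 2 * ‖W * (constraintDefect φ W)ᵀ‖ := by
        rw [dissolve_sub_self, norm_smul, norm_neg, norm_div, norm_one, RCLike.norm_ofNat]
    _ ≤ 1 / 2 * (‖W‖ * ‖(constraintDefect φ W)ᵀ‖) := by
        gcongr
        exact frobenius_norm_mul _ _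
    _ = 1 / 2 * (‖W‖ * ‖constraintDefect φ W‖) := by rw [frobenius_norm_transpose]

theorem norm_dissolve_dissolve_sub_dissolve_le (h_norm : ‖dissolve φ Y‖ ≤ ρ)
    (h_quad : ‖constraintDefect φ (dissolve φ Y)‖ ≤ κ * ‖constraintDefect φ Y‖ ^ 2) :
    ‖dissolve φ (dissolve φ Y) - dissolve φ Y‖ ≤
      1 / 2 * (ρ * (κ * ‖constraintDefect φ Y‖ ^ 2)) := by
  have hρ : 0 ≤ ρ := (norm_nonneg _).trans h_norm
  exact (norm_dissolve_sub_self_le φ (dissolve φ Y)).trans (by gcongr)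

theorem apply_dissolve_dissolve_le {M : ℝ≥0} {s : Set (Matrix m n 𝕜)}
    (hf : LipschitzOnWith M f s) (hY : dissolve φ Y ∈ s) (hY' : dissolve φ (dissolve φ Y) ∈ s)
    (h_norm : ‖dissolve φ Y‖ ≤ ρ)
    (h_quad : ‖constraintDefect φ (dissolve φ Y)‖ ≤ κ * ‖constraintDefect φ Y‖ ^ 2)
    (hβ : 2 * ρ * κ * M ≤ β) :
    f (dissolve φ (dissolve φ Y)) ≤ f (dissolve φ Y) + β / 4 * ‖constraintDefect φ Y‖ ^ 2 := by
  calc f (dissolve φ (dissolve φ Y))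
      ≤ f (dissolve φ Y) + M * ‖dissolve φ (dissolve φ Y) - dissolve φ Y‖ := by
        simpa only [dist_eq_norm] using hf.le_add_mul hY' hY
    _ ≤ f (dissolve φ Y) + M * (1 / 2 * (ρ * (κ * ‖constraintDefect φ Y‖ ^ 2))) := by
        gcongr
        exact norm_dissolve_dissolve_sub_dissolve_le h_norm h_quad
    _ = f (dissolve φ Y) + 2 * ρ * κ * M / 4 * ‖constraintDefect φ Y‖ ^ 2 := by ring
    _ ≤ f (dissolve φ Y) + β / 4 * ‖constraintDefect φ Y‖ ^ 2 := by gcongr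

theorem stmt_19_general {M : ℝ≥0} {s : Set (Matrix m n 𝕜)} (hf : LipschitzOnWith M f s)
    (hY : dissolve φ Y ∈ s) (hY' : dissolve φ (dissolve φ Y) ∈ s) (hβ₀ : 0 ≤ β)
    (h_norm : ‖dissolve φ Y‖ ≤ ρ)
    (h_half : ‖constraintDefect φ (dissolve φ Y)‖ ≤ 1 / 2 * ‖constraintDefect φ Y‖)
    (h_quad : ‖constraintDefect φ (dissolve φ Y)‖ ≤ κ * ‖constraintDefect φ Y‖ ^ 2)
    (hβ : 2 * ρ * κ * M ≤ β) :
    dissolvingPenalty φ f β (dissolve φ Y) ≤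
      dissolvingPenalty φ f β Y - β / 8 * ‖constraintDefect φ Y‖ ^ 2 := by
  have h_objective : f (dissolve φ (dissolve φ Y)) ≤
      f (dissolve φ Y) + β / 4 * ‖constraintDefect φ Y‖ ^ 2 :=
    apply_dissolve_dissolve_le hf hY hY' h_norm h_quad hβ
  have h_penalty : β / 2 * ‖constraintDefect φ (dissolve φ Y)‖ ^ 2 ≤
      β / 2 * (1 / 2 * ‖constraintDefect φ Y‖) ^ 2 := by gcongr
  unfold dissolvingPenalty
  linarith

end ConstraintDissolving

theorem stmt_19 {n p : ℕ} (hn : 0 < n) (hp : 0 < p)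
    (φ : Matrix (Fin n) (Fin p) ℝ →ₗ[ℝ] Matrix (Fin n) (Fin p) ℝ)
    (f : Matrix (Fin n) (Fin p) ℝ → ℝ)
    (M : ℝ) (hM0 : 0 ≤ M)
    (hM : ∀ A B : Matrix (Fin n) (Fin p) ℝ, |f A - f B| ≤ M * ‖A - B‖)
    (β : ℝ) (hβ0 : 0 < β)
    (Y : Matrix (Fin n) (Fin p) ℝ)
    (L δ α αc : ℝ) (hL0 : 0 < L) (hδ0 : 0 < δ) (hα0 : 0 < α) (hαc0 : 0 < αc)
    (h1 : ‖Amap φ Y‖ ≤ α / 3)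
    (h2 : ‖Cmap φ (Amap φ Y)‖ ≤ (1/2 : ℝ) * ‖Cmap φ Y‖)
    (h3 : ‖Cmap φ (Amap φ Y)‖ ≤ (8 * αc * L / δ ^ 2) * ‖Cmap φ Y‖ ^ 2)
    (hβ : β ≥ 16 * α * αc * L * M / (3 * δ ^ 2)) :
    f (Amap φ (Amap φ Y)) + (β / 2) * ‖Cmap φ (Amap φ Y)‖ ^ 2 ≤
      (f (Amap φ Y) + (β / 2) * ‖Cmap φ Y‖ ^ 2) - (β / 8) * ‖Cmap φ Y‖ ^ 2 := by
  lift M to NNReal using hM0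
  have hf : LipschitzWith M f := .of_dist_le_mul fun A B ↦ by
    simpa only [dist_eq_norm, Real.norm_eq_abs] using hM A B
  have hβ' : 2 * (α / 3) * (8 * αc * L / δ ^ 2) * M ≤ β := le_of_eq_of_le (by ring) hβ
  exact stmt_19_general (φ := φ) (hf.lipschitzOnWith (s := Set.univ)) (Set.mem_univ _)
    (Set.mem_univ _) hβ0.le h1 h2 h3 hβ'
end
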